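/- Let N ≥ 1 be an integer, let C ⊆ ℝ^N be open and convex, and let H : C × ℝ^N → ℝ be smooth. Then the following are equivalent. (i) There exists a twice continuously differentiable function u : C → ℝ (a superpotential) such that H(q, ∇u(q)) = 0 for every q ∈ C. (ii) There exist continuously differentiable maps α from C to the invertible N×N real matrices and β : C → ℝ^N such that, defining Φ_j(q,p) := Σ_{i=1}^N p_i α(q)_{ij} + β_j(q) for 1 ≤ j ≤ N, one has: (a) every (q,p) ∈ C × ℝ^N with Φ_1(q,p) = ⋯ = Φ_N(q,p) = 0 satisfies H(q,p) = 0; and (b) for all 1 ≤ i < j ≤ N, the Poisson bracket {Φ_i, Φ_j} vanishes at every (q,p) ∈ C × ℝ^N with Φ_1(q,p) = ⋯ = Φ_N(q,p) = 0. -/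

import Mathlib

/-- Partial derivative of `F : (q,p) ↦ F q p` in the `i`-th `q`-coordinate. -/
noncomputable def pderivQ {N : ℕ} (F : (Fin N → ℝ) → (Fin N → ℝ) → ℝ) (i : Fin N)
    (q p : Fin N → ℝ) : ℝ :=
  deriv (fun t => F (Function.update q i t) p) (q i)

/-- Partial derivative of `F : (q,p) ↦ F q p` in the `i`-th `p`-coordinate. -/
noncomputable def pderivP {N : ℕ} (F : (Fin N → ℝ) → (Fin N → ℝ) → ℝ) (i : Fin N)
    (q p : Fin N → ℝ) : ℝ :=
  deriv (fun t => F q (Function.update p i t)) (p i)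

/-- Canonical Poisson bracket on phase space `ℝ^N × ℝ^N`. -/
noncomputable def poisson {N : ℕ} (F G : (Fin N → ℝ) → (Fin N → ℝ) → ℝ)
    (q p : Fin N → ℝ) : ℝ :=
  ∑ i : Fin N, (pderivQ F i q p * pderivP G i q p - pderivP F i q p * pderivQ G i q p)

/-- Coordinatewise gradient of `u : ℝ^N → ℝ`. -/
noncomputable def grad {N : ℕ} (u : (Fin N → ℝ) → ℝ) (q : Fin N → ℝ) : Fin N → ℝ :=
  fun i => deriv (fun t => u (Function.update q i t)) (q i)

section

variable {N : ℕ}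

theorem HasFDerivAt.hasDerivAt_comp_update {f : (Fin N → ℝ) → ℝ} {f' : (Fin N → ℝ) →L[ℝ] ℝ}
    {q : Fin N → ℝ} (hf : HasFDerivAt f f' q) (k : Fin N) :
    HasDerivAt (fun t => f (Function.update q k t)) (f' (Pi.single k 1)) (q k) := by
  have hq : HasFDerivAt f f' (Function.update q k (q k)) := by simpa using hf
  exact hq.comp_hasDerivAt (q k) (hasDerivAt_update q k (q k))

theorem grad_eq_of_hasFDerivAt {u : (Fin N → ℝ) → ℝ} {u' : (Fin N → ℝ) →L[ℝ] ℝ}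
    {q : Fin N → ℝ} (hu : HasFDerivAt u u' q) (k : Fin N) :
    grad u q k = u' (Pi.single k 1) :=
  (hu.hasDerivAt_comp_update k).deriv

theorem pderivQ_affine {a : Fin N → (Fin N → ℝ) → ℝ} {b : (Fin N → ℝ) → ℝ} {q : Fin N → ℝ}
    (ha : ∀ l, DifferentiableAt ℝ (a l) q) (hb : DifferentiableAt ℝ b q)
    (p : Fin N → ℝ) (k : Fin N) :
    pderivQ (fun q' p' => (∑ l, p' l * a l q') + b q') k q p =
      (∑ l, p l * fderiv ℝ (a l) q (Pi.single k 1)) + fderiv ℝ b q (Pi.single k 1) := by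
  have h : HasFDerivAt (fun q' => (∑ l, p l * a l q') + b q')
      ((∑ l, p l • fderiv ℝ (a l) q) + fderiv ℝ b q) q :=
    (HasFDerivAt.fun_sum fun l _ => (ha l).hasFDerivAt.const_mul (p l)).add hb.hasFDerivAt
  have := (h.hasDerivAt_comp_update k).deriv
  simpa [pderivQ] using this

theorem pderivP_affine (a : Fin N → (Fin N → ℝ) → ℝ) (b : (Fin N → ℝ) → ℝ)
    (q p : Fin N → ℝ) (k : Fin N) :
    pderivP (fun q' p' => (∑ l, p' l * a l q') + b q') k q p = a k q := by
  have h : HasFDerivAt (fun p' : Fin N → ℝ => (∑ l, p' l * a l q) + b q)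
      (∑ l, a l q • ContinuousLinearMap.proj (R := ℝ) (φ := fun _ : Fin N => ℝ) l) p :=
    (HasFDerivAt.fun_sum fun l _ => (hasFDerivAt_apply (𝕜 := ℝ) l p).mul_const (a l q)).add_const _
  have := (h.hasDerivAt_comp_update k).deriv
  simpa [pderivP, Pi.single_apply] using this

/-- If the affine functions `Φⱼ` all vanish along the graph of `P` near `q`, their Poisson brackets
on the graph are the entries of the curl of `P` conjugated by the coefficient matrix. -/
theorem poisson_affine_eq_curl {α : (Fin N → ℝ) → Matrix (Fin N) (Fin N) ℝ}
    {β P : (Fin N → ℝ) → (Fin N → ℝ)} {q : Fin N → ℝ}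
    (hα : ∀ i j, DifferentiableAt ℝ (fun q' => α q' i j) q)
    (hβ : ∀ j, DifferentiableAt ℝ (fun q' => β q' j) q)
    (hP : ∀ j, DifferentiableAt ℝ (fun q' => P q' j) q)
    (hzero : ∀ j, ∀ᶠ q' in nhds q, (∑ l, P q' l * α q' l j) + β q' j = 0) (i j : Fin N) :
    poisson (fun q' p' => (∑ l, p' l * α q' l i) + β q' i)
        (fun q' p' => (∑ l, p' l * α q' l j) + β q' j) q (P q) =
      ∑ k, ∑ l, α q k i * (fderiv ℝ (fun q' => P q' l) q (Pi.single k 1) -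
        fderiv ℝ (fun q' => P q' k) q (Pi.single l 1)) * α q l j := by
  have key : ∀ j k, (∑ l, P q l * fderiv ℝ (fun q' => α q' l j) q (Pi.single k 1)) +
      fderiv ℝ (fun q' => β q' j) q (Pi.single k 1) =
      -∑ l, fderiv ℝ (fun q' => P q' l) q (Pi.single k 1) * α q l j := by
    intro j k
    have h := (HasFDerivAt.fun_sum (u := Finset.univ) fun l _ =>
      (hP l).hasFDerivAt.mul (hα l j).hasFDerivAt).add (hβ j).hasFDerivAt
    have h0 := h.unique ((hasFDerivAt_const (0 : ℝ) q).congr_of_eventuallyEq (hzero j))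
    have h1 := congrArg (fun L : (Fin N → ℝ) →L[ℝ] ℝ => L (Pi.single k 1)) h0
    simp only [add_apply, sum_apply, smul_apply, smul_eq_mul, zero_apply,
      Finset.sum_add_distrib] at h1
    simp only [mul_comm _ (α q _ j)]
    linarith
  unfold poisson
  simp only [pderivQ_affine (fun l => hα l _) (hβ _), pderivP_affine (fun l q' => α q' l _), key]
  simp only [mul_sub, sub_mul, Finset.sum_sub_distrib, neg_mul, mul_neg, Finset.sum_neg_distrib,
    Finset.sum_mul, Finset.mul_sum]
  rw [Finset.sum_comm (f := fun k l => α q k i * fderiv ℝ (fun q' => P q' k) q (Pi.single l 1) *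
    α q l j), sub_neg_eq_add, neg_add_eq_sub]
  congr 1
  · exact Finset.sum_congr rfl fun k _ => Finset.sum_congr rfl fun l _ => by ring
  · exact Finset.sum_congr rfl fun k _ => Finset.sum_congr rfl fun l _ => by ring

theorem poisson_swap (F G : (Fin N → ℝ) → (Fin N → ℝ) → ℝ) (q p : Fin N → ℝ) :
    poisson F G q p = -poisson G F q p := by
  unfold poisson
  rw [← Finset.sum_neg_distrib]
  exact Finset.sum_congr rfl fun k _ => by ring

theorem poisson_self (F : (Fin N → ℝ) → (Fin N → ℝ) → ℝ) (q p : Fin N → ℝ) :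
    poisson F F q p = 0 := by
  linarith [poisson_swap F F q p]

theorem eq_zero_of_transpose_mul_mul_eq_zero {A Ω : Matrix (Fin N) (Fin N) ℝ} (hA : IsUnit A)
    (h : A.transpose * Ω * A = 0) : Ω = 0 :=
  ((Matrix.isUnit_transpose A).2 hA).mul_right_eq_zero.1 (hA.mul_left_eq_zero.1 h)

theorem contDiffOn_matrix_det {n : WithTop ℕ∞} {M : (Fin N → ℝ) → Matrix (Fin N) (Fin N) ℝ}
    {C : Set (Fin N → ℝ)} (hM : ∀ i j, ContDiffOn ℝ n (fun q => M q i j) C) :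
    ContDiffOn ℝ n (fun q => (M q).det) C := by
  simp only [Matrix.det_apply']
  exact ContDiffOn.sum fun σ _ => contDiffOn_const.mul (contDiffOn_prod fun i _ => hM _ _)

theorem contDiffOn_matrix_inv {n : WithTop ℕ∞} {M : (Fin N → ℝ) → Matrix (Fin N) (Fin N) ℝ}
    {C : Set (Fin N → ℝ)} (hM : ∀ i j, ContDiffOn ℝ n (fun q => M q i j) C)
    (hunit : ∀ q ∈ C, IsUnit (M q)) (i j : Fin N) :
    ContDiffOn ℝ n (fun q => (M q)⁻¹ i j) C := by
  simp only [Matrix.inv_def, Matrix.smul_apply, Matrix.adjugate_apply, smul_eq_mul,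
    Ring.inverse_eq_inv']
  refine ContDiffOn.mul ((contDiffOn_matrix_det hM).inv fun q hq => ?_)
    (contDiffOn_matrix_det fun k l => ?_)
  · exact ((Matrix.isUnit_iff_isUnit_det _).1 (hunit q hq)).ne_zero
  · by_cases hk : k = j
    · simpa [Matrix.updateRow_apply, hk] using contDiffOn_const
    · simpa [Matrix.updateRow_apply, hk] using hM k l

/-- A curl-free `C¹` vector field on an open convex set is the gradient of a `C²` function. -/
theorem exists_potential_of_curl_eq_zero {C : Set (Fin N → ℝ)} (hCo : IsOpen C) (hCc : Convex ℝ C)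
    {P : (Fin N → ℝ) → (Fin N → ℝ)} (hP : ∀ j, ContDiffOn ℝ 1 (fun q => P q j) C)
    (hcurl : ∀ q ∈ C, ∀ k l, fderiv ℝ (fun q' => P q' l) q (Pi.single k 1) =
      fderiv ℝ (fun q' => P q' k) q (Pi.single l 1)) :
    ∃ u : (Fin N → ℝ) → ℝ, ContDiffOn ℝ 2 u C ∧ ∀ q ∈ C, grad u q = P q := by
  let ω : (Fin N → ℝ) → (Fin N → ℝ) →L[ℝ] ℝ := fun q =>
    ∑ l, P q l • ContinuousLinearMap.proj (R := ℝ) (φ := fun _ : Fin N => ℝ) l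
  have hω : ContDiffOn ℝ 1 ω C := ContDiffOn.sum fun l _ => (hP l).smul contDiffOn_const
  have hPd : ∀ q ∈ C, ∀ l, DifferentiableAt ℝ (fun q' => P q' l) q := fun q hq l =>
    ((hP l).differentiableOn one_ne_zero).differentiableAt (hCo.mem_nhds hq)
  have hω' : ∀ q ∈ C, ∀ x y, fderiv ℝ ω q x y =
      ∑ l, fderiv ℝ (fun q' => P q' l) q x * y l := by
    intro q hq x y
    have h : HasFDerivAt ω _ q := HasFDerivAt.fun_sum (u := Finset.univ) fun l _ =>
      (hPd q hq l).hasFDerivAt.smul_const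
        (ContinuousLinearMap.proj (R := ℝ) (φ := fun _ : Fin N => ℝ) l)
    rw [h.fderiv]
    simp
  have hexp : ∀ (L : (Fin N → ℝ) →L[ℝ] ℝ) (x : Fin N → ℝ),
      L x = ∑ k, x k * L (Pi.single k 1) := by
    intro L x
    conv_lhs => rw [pi_eq_sum_univ' x]
    simp [map_sum]
  obtain ⟨u, hu⟩ := hCc.exists_forall_hasFDerivAt_of_fderiv_symmetric hCo
    (hω.differentiableOn one_ne_zero) (fun q hq x y => by
      rw [hω' q hq, hω' q hq]
      simp only [hexp (fderiv ℝ (fun q' => P q' _) q) x, hexp (fderiv ℝ (fun q' => P q' _) q) y,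
        Finset.sum_mul]
      rw [Finset.sum_comm]
      refine Finset.sum_congr rfl fun k _ => Finset.sum_congr rfl fun l _ => ?_
      rw [hcurl q hq k l]
      ring)
  refine ⟨u, ?_, fun q hq => ?_⟩
  · rw [show (2 : WithTop ℕ∞) = 1 + 1 by norm_num, contDiffOn_succ_iff_fderiv_of_isOpen hCo]
    exact ⟨fun q hq => (hu q hq).differentiableAt.differentiableWithinAt, by simp,
      hω.congr fun q hq => (hu q hq).fderiv⟩
  · ext k
    simp [grad_eq_of_hasFDerivAt (hu q hq), ω, Pi.single_apply]

theorem grad_eq_fderiv {u : (Fin N → ℝ) → ℝ} {q : Fin N → ℝ} (hu : DifferentiableAt ℝ u q)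
    (k : Fin N) : grad u q k = fderiv ℝ u q (Pi.single k 1) :=
  grad_eq_of_hasFDerivAt hu.hasFDerivAt k

theorem contDiffOn_grad {C : Set (Fin N → ℝ)} (hCo : IsOpen C) {u : (Fin N → ℝ) → ℝ}
    (hu : ContDiffOn ℝ 2 u C) (k : Fin N) : ContDiffOn ℝ 1 (fun q => grad u q k) C := by
  have h : ContDiffOn ℝ 1 (fderiv ℝ u) C := hu.fderiv_of_isOpen hCo (by norm_num)
  refine (h.clm_apply contDiffOn_const).congr fun q hq => grad_eq_fderiv ?_ k
  exact (hu.differentiableOn two_ne_zero).differentiableAt (hCo.mem_nhds hq)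

theorem fderiv_grad_symm {C : Set (Fin N → ℝ)} (hCo : IsOpen C) {u : (Fin N → ℝ) → ℝ}
    (hu : ContDiffOn ℝ 2 u C) {q : Fin N → ℝ} (hq : q ∈ C) (k l : Fin N) :
    fderiv ℝ (fun q' => grad u q' l) q (Pi.single k 1) =
      fderiv ℝ (fun q' => grad u q' k) q (Pi.single l 1) := by
  have hgrad : ∀ l x, fderiv ℝ (fun q' => grad u q' l) q x =
      fderiv ℝ (fderiv ℝ u) q x (Pi.single l 1) := by
    intro l x
    have heq : (fun q' => grad u q' l) =ᶠ[nhds q] fun q' => fderiv ℝ u q' (Pi.single l 1) := by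
      filter_upwards [hCo.mem_nhds hq] with q' hq'
      exact grad_eq_fderiv
        ((hu.differentiableOn two_ne_zero).differentiableAt (hCo.mem_nhds hq')) l
    have hd : DifferentiableAt ℝ (fderiv ℝ u) q :=
      ((hu.fderiv_of_isOpen hCo (m := 1) (by norm_num)).differentiableOn
        one_ne_zero).differentiableAt (hCo.mem_nhds hq)
    rw [heq.fderiv_eq, (hd.hasFDerivAt.clm_apply (hasFDerivAt_const _ q)).fderiv]
    simp
  rw [hgrad, hgrad]
  exact (hu.contDiffAt (hCo.mem_nhds hq)).isSymmSndFDerivAt (by simp) _ _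

end

/-- Proposition 1.1 of Dancer–Wang: existence of a superpotential is equivalent to the
existence of `N` independent "on-shell" first integrals which are linear in momenta. -/
theorem superpotential_iff_linear_first_integrals
    (N : ℕ) (hN : 1 ≤ N) (C : Set (Fin N → ℝ)) (hCopen : IsOpen C) (hCconv : Convex ℝ C)
    (H : (Fin N → ℝ) → (Fin N → ℝ) → ℝ)
    (hH : ContDiffOn ℝ (⊤ : ℕ∞) (fun x : (Fin N → ℝ) × (Fin N → ℝ) => H x.1 x.2)
      (C ×ˢ (Set.univ : Set (Fin N → ℝ)))) :
    (∃ u : (Fin N → ℝ) → ℝ, ContDiffOn ℝ 2 u C ∧ ∀ q ∈ C, H q (grad u q) = 0) ↔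
    (∃ (α : (Fin N → ℝ) → Matrix (Fin N) (Fin N) ℝ) (β : (Fin N → ℝ) → (Fin N → ℝ)),
      (∀ i j : Fin N, ContDiffOn ℝ 1 (fun q => α q i j) C) ∧
      (∀ j : Fin N, ContDiffOn ℝ 1 (fun q => β q j) C) ∧
      (∀ q ∈ C, IsUnit (α q)) ∧
      -- (a) the common zero set of the Φⱼ is contained in the zero set of H
      (∀ q ∈ C, ∀ p : Fin N → ℝ,
        (∀ j : Fin N, (∑ i : Fin N, p i * α q i j) + β q j = 0) → H q p = 0) ∧
      -- (b) the Poisson brackets {Φᵢ, Φⱼ} vanish on the common zero set of the Φₖ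
      (∀ i j : Fin N, i < j → ∀ q ∈ C, ∀ p : Fin N → ℝ,
        (∀ k : Fin N, (∑ l : Fin N, p l * α q l k) + β q k = 0) →
        poisson (fun q' p' => (∑ l : Fin N, p' l * α q' l i) + β q' i)
                (fun q' p' => (∑ l : Fin N, p' l * α q' l j) + β q' j) q p = 0)) := by
  have hdiff : ∀ {f : (Fin N → ℝ) → ℝ}, ContDiffOn ℝ 1 f C → ∀ q ∈ C, DifferentiableAt ℝ f q :=
    fun hf q hq => (hf.differentiableOn one_ne_zero).differentiableAt (hCopen.mem_nhds hq)
  constructor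
  · rintro ⟨u, hu, hHu⟩
    have hp : ∀ q p : Fin N → ℝ,
        (∀ j, (∑ i, p i * (1 : Matrix (Fin N) (Fin N) ℝ) i j) + (-grad u q) j = 0) →
        p = grad u q := by
      intro q p h
      ext j
      have := h j
      simp only [Matrix.one_apply, mul_ite, mul_one, mul_zero, Finset.sum_ite_eq',
        Finset.mem_univ, if_true, Pi.neg_apply] at this
      linarith
    refine ⟨fun _ => 1, fun q => -grad u q, fun i j => contDiffOn_const,
      fun j => (contDiffOn_grad hCopen hu j).neg, fun _ _ => isUnit_one,
      fun q hq p h => hp q p h ▸ hHu q hq, fun i j _ q hq p h => ?_⟩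
    rw [hp q p h, poisson_affine_eq_curl (α := fun _ => 1) (β := fun q => -grad u q)
      (fun i j => differentiableAt_const _)
      (fun j => hdiff (contDiffOn_grad hCopen hu j).neg q hq)
      (fun j => hdiff (contDiffOn_grad hCopen hu j) q hq)
      (fun j => Filter.Eventually.of_forall fun q' => by simp [Matrix.one_apply])]
    exact Finset.sum_eq_zero fun k _ => Finset.sum_eq_zero fun l _ => by
      rw [fderiv_grad_symm hCopen hu hq k l, sub_self, mul_zero, zero_mul]
  · rintro ⟨α, β, hα, hβ, hunit, hzero, hbracket⟩
    let P : (Fin N → ℝ) → (Fin N → ℝ) := fun q => Matrix.vecMul (-β q) (α q)⁻¹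
    have hPΦ : ∀ q ∈ C, ∀ j, (∑ l, P q l * α q l j) + β q j = 0 := by
      intro q hq j
      have h : Matrix.vecMul (P q) (α q) = -β q := by
        rw [Matrix.vecMul_vecMul,
          Matrix.nonsing_inv_mul _ ((Matrix.isUnit_iff_isUnit_det _).1 (hunit q hq)),
          Matrix.vecMul_one]
      have hj : ∑ l, P q l * α q l j = -β q j := congrFun h j
      rw [hj, neg_add_cancel]
    have hP : ∀ j, ContDiffOn ℝ 1 (fun q => P q j) C := by
      intro j
      simp only [P, Matrix.vecMul, dotProduct, Pi.neg_apply]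
      exact ContDiffOn.sum fun l _ => (hβ l).neg.mul (contDiffOn_matrix_inv hα hunit l j)
    have hcurl : ∀ q ∈ C, ∀ k l, fderiv ℝ (fun q' => P q' l) q (Pi.single k 1) =
        fderiv ℝ (fun q' => P q' k) q (Pi.single l 1) := by
      intro q hq
      let Ω : Matrix (Fin N) (Fin N) ℝ := fun k l =>
        fderiv ℝ (fun q' => P q' l) q (Pi.single k 1) -
          fderiv ℝ (fun q' => P q' k) q (Pi.single l 1)
      have hΩ : Ω = 0 := by
        refine eq_zero_of_transpose_mul_mul_eq_zero (hunit q hq) ?_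
        ext i j
        have hpoisson := poisson_affine_eq_curl (fun i j => hdiff (hα i j) q hq)
          (fun j => hdiff (hβ j) q hq) (fun j => hdiff (hP j) q hq)
          (fun j => Filter.mem_of_superset (hCopen.mem_nhds hq) fun q' hq' => hPΦ q' hq' j) i j
        have hvanish : poisson (fun q' p' => (∑ l, p' l * α q' l i) + β q' i)
            (fun q' p' => (∑ l, p' l * α q' l j) + β q' j) q (P q) = 0 := by
          rcases lt_trichotomy i j with h | rfl | h
          · exact hbracket i j h q hq _ (hPΦ q hq)
          · exact poisson_self _ _ _
          · rw [poisson_swap, hbracket j i h q hq _ (hPΦ q hq), neg_zero]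
        rw [hpoisson, Finset.sum_comm] at hvanish
        simpa only [Matrix.mul_apply, Matrix.transpose_apply, Finset.sum_mul,
          Matrix.zero_apply] using hvanish
      intro k l
      exact sub_eq_zero.1 (congrFun (congrFun hΩ k) l)
    obtain ⟨u, hu, hgrad⟩ := exists_potential_of_curl_eq_zero hCopen hCconv hP hcurl
    exact ⟨u, hu, fun q hq => hzero q hq _ (hgrad q hq ▸ hPΦ q hq)⟩
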